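/- Let $g = g(t,y)$ be a smooth function on $[0,\infty) \times [-1,1]$ satisfying $g(t,\pm 1) = 0$ for all $t \ge 0$ and solving $\partial_t g + \mathcal{L}g = \mathcal{N}(g)$ for $t > 0$ and $y \in (-1,1)$. Then there exists a constant $C > 0$ such that for all $t > 0$: $E'(t) + D(t) \le C\left(E(t)^2 + E(t)^{10} + \left(E(t)^{1/3} + E(t)^{5/2}\right) D(t)\right)$, where $E(t) = \frac{1}{2}\int_{-1}^{1} (\partial_y g(t,y))^2\, dy$ and $D(t) = 8\int_{-1}^{1} (\partial_y^2 g(t,y))^2\, dy + \frac{1}{2}\int_{-1}^{1} (1-y^2)(\partial_y^3 g(t,y))^2\, dy$. -/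

import Mathlib

open MeasureTheory Set
open scoped ENNReal

/-- Spatial derivative on the interval `[-1, 1]`. -/
noncomputable def dI (f : ℝ → ℝ) : ℝ → ℝ := derivWithin f (Icc (-1) 1)

/-- The energy `E(t) = (1/2) ∫_{-1}^{1} (∂_y g(t,y))² dy`. -/
noncomputable def energy (g : ℝ → ℝ → ℝ) (t : ℝ) : ℝ :=
  (1/2) * ∫ y in Ioo (-1:ℝ) 1, (dI (g t) y) ^ 2

/-- The dissipation
`D(t) = 8 ∫_{-1}^{1} (∂_y² g(t,y))² dy + (1/2) ∫_{-1}^{1} (1-y²) (∂_y³ g(t,y))² dy`. -/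
noncomputable def dissipation (g : ℝ → ℝ → ℝ) (t : ℝ) : ℝ :=
  8 * (∫ y in Ioo (-1:ℝ) 1, (dI (dI (g t)) y) ^ 2)
    + (1/2) * ∫ y in Ioo (-1:ℝ) 1, (1 - y ^ 2) * (dI (dI (dI (g t))) y) ^ 2

/-- `g` is a smooth solution of `∂_t g + 𝓛 g = 𝓝(g)` on `(0,∞) × (-1,1)` with
`g(t, ±1) = 0`, where `𝓛 g = -10 ∂_y² g - 5 y ∂_y³ g + ((1-y²)/2) ∂_y⁴ g` and `𝓝(g)`
is the nonlinearity (2.9) of the Lagrangian thin-film equation. -/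
def IsSolution (g : ℝ → ℝ → ℝ) : Prop :=
  ContDiffOn ℝ ((⊤ : ℕ∞) : WithTop ℕ∞) (fun q : ℝ × ℝ => g q.1 q.2) ((Ici (0:ℝ)) ×ˢ (Icc (-1:ℝ) 1)) ∧
  (∀ t ≥ (0:ℝ), g t (-1) = 0 ∧ g t 1 = 0) ∧
  (∀ t > (0:ℝ), ∀ y ∈ Ioo (-1:ℝ) 1,
    deriv (fun s => g s y) t
      + (-10 * dI (dI (g t)) y - 5 * y * dI (dI (dI (g t))) y
          + (1 - y ^ 2) / 2 * dI (dI (dI (dI (g t)))) y)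
    = -25 * (1 + g t y) ^ 4 * (dI (g t) y) ^ 2
      - 10 * ((1 + g t y) ^ 5 - 1) * dI (dI (g t)) y
      - 15 * y * (1 + g t y) ^ 3 * (dI (g t) y) ^ 3
      - 30 * y * (1 + g t y) ^ 4 * dI (g t) y * dI (dI (g t)) y
      - 5 * y * ((1 + g t y) ^ 5 - 1) * dI (dI (dI (g t))) y
      + (1 - y ^ 2) / 2 * (1 + g t y) ^ 2 * (dI (g t) y) ^ 4
      + 11/2 * (1 - y ^ 2) * (1 + g t y) ^ 3 * (dI (g t) y) ^ 2 * dI (dI (g t)) y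
      + 2 * (1 - y ^ 2) * (1 + g t y) ^ 4 * (dI (dI (g t)) y) ^ 2
      + 7/2 * (1 - y ^ 2) * (1 + g t y) ^ 4 * dI (g t) y * dI (dI (dI (g t))) y
      + (1 - y ^ 2) / 2 * ((1 + g t y) ^ 5 - 1) * dI (dI (dI (dI (g t)))) y)


lemma ii_of_cont {f : ℝ → ℝ} (hf : ContinuousOn f (Icc (-1) 1)) :
    IntervalIntegrable f volume (-1) 1 := by
  apply ContinuousOn.intervalIntegrable
  rwa [uIcc_of_le (by norm_num)]

lemma ftc11 {F f : ℝ → ℝ} (hF : ContinuousOn F (Icc (-1) 1)) (hf : ContinuousOn f (Icc (-1) 1))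
    (hd : ∀ y ∈ Ioo (-1:ℝ) 1, HasDerivAt F (f y) y) :
    ∫ y in (-1:ℝ)..1, f y = F 1 - F (-1) :=
  intervalIntegral.integral_eq_sub_of_hasDerivAt_of_le (by norm_num) hF hd (ii_of_cont hf)

lemma osc {F f : ℝ → ℝ} (hF : ContinuousOn F (Icc (-1) 1)) (hf : ContinuousOn f (Icc (-1) 1))
    (hd : ∀ y ∈ Ioo (-1:ℝ) 1, HasDerivAt F (f y) y) {x y : ℝ} (hx : x ∈ Icc (-1:ℝ) 1)
    (hy : y ∈ Icc (-1:ℝ) 1) : |F y - F x| ≤ ∫ z in (-1:ℝ)..1, |f z| := by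
  wlog h : x ≤ y generalizing x y
  · rw [abs_sub_comm]; exact this hy hx (le_of_not_ge h)
  have hs : Icc x y ⊆ Icc (-1:ℝ) 1 := Icc_subset_Icc hx.1 hy.2
  have e : ∫ z in x..y, f z = F y - F x := by
    apply intervalIntegral.integral_eq_sub_of_hasDerivAt_of_le h (hF.mono hs)
    · intro z hz; exact hd z ⟨lt_of_le_of_lt hx.1 hz.1, lt_of_lt_of_le hz.2 hy.2⟩
    · apply ContinuousOn.intervalIntegrable
      rw [uIcc_of_le h]; exact hf.mono hs
  rw [← e]
  refine (intervalIntegral.abs_integral_le_integral_abs h).trans ?_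
  apply intervalIntegral.integral_mono_interval hx.1 h hy.2
  · exact Filter.Eventually.of_forall fun z => abs_nonneg _
  · exact ii_of_cont hf.abs

lemma imono {f k : ℝ → ℝ} (hf : ContinuousOn f (Icc (-1) 1)) (hk : ContinuousOn k (Icc (-1) 1))
    (h : ∀ y ∈ Icc (-1:ℝ) 1, f y ≤ k y) : ∫ y in (-1:ℝ)..1, f y ≤ ∫ y in (-1:ℝ)..1, k y :=
  intervalIntegral.integral_mono_on (by norm_num) (ii_of_cont hf) (ii_of_cont hk) h

lemma inn {f : ℝ → ℝ} (h : ∀ y ∈ Icc (-1:ℝ) 1, 0 ≤ f y) : 0 ≤ ∫ y in (-1:ℝ)..1, f y :=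
  intervalIntegral.integral_nonneg (by norm_num) h

lemma cs11 {u v : ℝ → ℝ} (hu : ContinuousOn u (Icc (-1) 1)) (hv : ContinuousOn v (Icc (-1) 1)) :
    ∫ y in (-1:ℝ)..1, |u y| * |v y| ≤
      √(∫ y in (-1:ℝ)..1, u y ^ 2) * √(∫ y in (-1:ℝ)..1, v y ^ 2) := by
  have key : ∀ x : ℝ, 0 ≤ (∫ y in (-1:ℝ)..1, u y ^ 2) * (x * x) +
      (2 * ∫ y in (-1:ℝ)..1, |u y| * |v y|) * x + ∫ y in (-1:ℝ)..1, v y ^ 2 := by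
    intro x
    have h0 : 0 ≤ ∫ y in (-1:ℝ)..1, (x * |u y| + |v y|) ^ 2 := inn fun y _ => sq_nonneg _
    have h1 : ∫ y in (-1:ℝ)..1, (x * |u y| + |v y|) ^ 2 =
      ∫ y in (-1:ℝ)..1, ((x * x) * u y ^ 2 + (2 * x) * (|u y| * |v y|) + v y ^ 2) := by
      congr 1; ext y
      nlinarith [sq_abs (u y), sq_abs (v y)]
    rw [h1, intervalIntegral.integral_add, intervalIntegral.integral_add,
      intervalIntegral.integral_const_mul, intervalIntegral.integral_const_mul] at h0
    · linarith
    all_goals apply ii_of_cont; fun_prop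
  have := discrim_le_zero key
  unfold discrim at this
  rw [← Real.sqrt_mul (inn fun y _ => sq_nonneg _)]
  apply Real.le_sqrt_of_sq_le
  nlinarith

lemma d_om (y : ℝ) : HasDerivAt (fun y : ℝ => 1 - y ^ 2) (-2 * y) y := by
  have := ((hasDerivAt_id' y).fun_pow 2).const_sub 1
  exact this.congr_deriv (by norm_num)

lemma d_sq {f : ℝ → ℝ} {f' y : ℝ} (h : HasDerivAt f f' y) :
    HasDerivAt (fun y : ℝ => f y ^ 2) (2 * f y * f') y :=
  (h.fun_pow 2).congr_deriv (by norm_num)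

lemma iadd {f k : ℝ → ℝ} (hf : ContinuousOn f (Icc (-1) 1)) (hk : ContinuousOn k (Icc (-1) 1)) :
    ∫ y in (-1:ℝ)..1, (f y + k y) = (∫ y in (-1:ℝ)..1, f y) + ∫ y in (-1:ℝ)..1, k y :=
  intervalIntegral.integral_add (ii_of_cont hf) (ii_of_cont hk)

lemma om_nn {y : ℝ} (hy : y ∈ Icc (-1:ℝ) 1) : 0 ≤ 1 - y ^ 2 := by nlinarith [hy.1, hy.2]

set_option maxHeartbeats 2000000 in
/-- the functional estimates -/
lemma fn_est (g w a b : ℝ → ℝ) (hg : ContinuousOn g (Icc (-1) 1)) (hw : ContinuousOn w (Icc (-1) 1))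
    (ha : ContinuousOn a (Icc (-1) 1)) (hb : ContinuousOn b (Icc (-1) 1))
    (dg : ∀ y ∈ Ioo (-1:ℝ) 1, HasDerivAt g (w y) y)
    (dw : ∀ y ∈ Ioo (-1:ℝ) 1, HasDerivAt w (a y) y)
    (da : ∀ y ∈ Ioo (-1:ℝ) 1, HasDerivAt a (b y) y)
    (g0 : g (-1) = 0) (g1 : g 1 = 0) (nw al nA nb : ℝ)
    (hnw : nw = √(∫ y in (-1:ℝ)..1, w y ^ 2)) (hal : al = √(∫ y in (-1:ℝ)..1, a y ^ 2))
    (hnA : nA = √(∫ y in (-1:ℝ)..1, (1 - y ^ 2) * a y ^ 2))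
    (hnb : nb = √(∫ y in (-1:ℝ)..1, (1 - y ^ 2) * b y ^ 2)) :
    (∀ y ∈ Icc (-1:ℝ) 1, |g y| ≤ √2 * nw) ∧ (∀ y ∈ Icc (-1:ℝ) 1, w y ^ 2 ≤ 2 * nw * al) ∧
    nw ^ 2 ≤ 4 * nw * al ∧ nA ^ 2 ≤ nw * nb + 2 * nw * al ∧ al ^ 2 ≤ 3/2 * nA ^ 2 + nA * nb ∧
    (∀ y ∈ Icc (-1:ℝ) 1, (1 - y ^ 2) * a y ^ 2 ≤ 2 * al ^ 2 + 2 * nA * nb) ∧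
    (∫ y in (-1:ℝ)..1, |w y| * |a y|) ≤ nw * al ∧
    (∫ y in (-1:ℝ)..1, |√(1 - y^2) * a y| * |a y|) ≤ nA * al := by
  have nw2 : ∫ y in (-1:ℝ)..1, w y ^ 2 = nw ^ 2 := by
    rw [hnw, Real.sq_sqrt]; exact inn fun y _ => sq_nonneg _
  have al2 : ∫ y in (-1:ℝ)..1, a y ^ 2 = al ^ 2 := by
    rw [hal, Real.sq_sqrt]; exact inn fun y _ => sq_nonneg _
  have nA2 : ∫ y in (-1:ℝ)..1, (1 - y ^ 2) * a y ^ 2 = nA ^ 2 := by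
    rw [hnA, Real.sq_sqrt]; exact inn fun y hy => mul_nonneg (om_nn hy) (sq_nonneg _)
  have eA : ∫ y in (-1:ℝ)..1, (√(1 - y ^ 2) * a y) ^ 2 = ∫ y in (-1:ℝ)..1, (1 - y ^ 2) * a y ^ 2 := by
    apply intervalIntegral.integral_congr
    intro y hy
    rw [uIcc_of_le (by norm_num)] at hy
    simp only [mul_pow, Real.sq_sqrt (om_nn hy)]
  have eb : ∫ y in (-1:ℝ)..1, (√(1 - y ^ 2) * b y) ^ 2 = ∫ y in (-1:ℝ)..1, (1 - y ^ 2) * b y ^ 2 := by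
    apply intervalIntegral.integral_congr
    intro y hy
    rw [uIcc_of_le (by norm_num)] at hy
    simp only [mul_pow, Real.sq_sqrt (om_nn hy)]
  have cA : ContinuousOn (fun y => √(1 - y ^ 2) * a y) (Icc (-1:ℝ) 1) := by fun_prop
  have cb : ContinuousOn (fun y => √(1 - y ^ 2) * b y) (Icc (-1:ℝ) 1) := by fun_prop
  have Iwa : (∫ y in (-1:ℝ)..1, |w y| * |a y|) ≤ nw * al := by
    rw [hnw, hal]; exact cs11 hw ha
  have IAa : (∫ y in (-1:ℝ)..1, |√(1 - y^2) * a y| * |a y|) ≤ nA * al := by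
    rw [hnA, hal, ← eA]; exact cs11 cA ha
  have IAb : (∫ y in (-1:ℝ)..1, |√(1 - y^2) * a y| * |√(1 - y^2) * b y|) ≤ nA * nb := by
    rw [hnA, hnb, ← eA, ← eb]; exact cs11 cA cb
  have Iwb : (∫ y in (-1:ℝ)..1, |w y| * |√(1 - y^2) * b y|) ≤ nw * nb := by
    rw [hnw, hnb, ← eb]; exact cs11 hw cb
  have Iw1 : (∫ y in (-1:ℝ)..1, |(1:ℝ)| * |w y|) ≤ √2 * nw := by
    have := cs11 (u := fun _ => (1:ℝ)) (v := w) continuousOn_const hw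
    have h2 : ∫ y in (-1:ℝ)..1, ((1:ℝ)) ^ 2 = 2 := by norm_num
    rw [h2, ← hnw] at this
    exact this
  have m1 : (-1:ℝ) ∈ Icc (-1:ℝ) 1 := by norm_num
  have hsup : ∀ y ∈ Icc (-1:ℝ) 1, w y ^ 2 ≤ 2 * nw * al := by
    obtain ⟨z, hz, hz0⟩ := exists_hasDerivAt_eq_zero (by norm_num : (-1:ℝ) < 1) hg (by rw [g0, g1]) dg
    intro y hy
    have h := osc (F := fun y => w y ^ 2) (f := fun y => 2 * w y * a y) (by fun_prop) (by fun_prop)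
      (fun y hy => d_sq (dw y hy)) (Ioo_subset_Icc_self hz) hy
    simp only [hz0] at h
    have h2 : ∫ z in (-1:ℝ)..1, |2 * w z * a z| = 2 * ∫ z in (-1:ℝ)..1, |w z| * |a z| := by
      rw [← intervalIntegral.integral_const_mul]
      congr 1; ext y; rw [abs_mul, abs_mul]; norm_num; ring
    rw [h2] at h
    have := le_abs_self (w y ^ 2 - 0 ^ 2)
    linarith
  refine ⟨?_, hsup, ?_, ?_, ?_, ?_, Iwa, IAa⟩
  · intro y hy
    have h := osc hg hw dg m1 hy
    simp only [g0, sub_zero] at h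
    simp only [abs_one, one_mul] at Iw1
    linarith
  · rw [← nw2]
    calc ∫ y in (-1:ℝ)..1, w y ^ 2 ≤ ∫ y in (-1:ℝ)..1, 2 * nw * al := imono (by fun_prop) (by fun_prop) hsup
      _ = 4 * nw * al := by simp; ring
  · have F := ftc11 (F := fun y => (1 - y ^ 2) * (w y * a y))
      (f := fun y => (-2 * y) * (w y * a y) + (1 - y ^ 2) * (a y * a y + w y * b y))
      (by fun_prop) (by fun_prop) (fun y hy => by
        have h1 : HasDerivAt (fun y : ℝ => 1 - y ^ 2) (-2 * y) y := d_om y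
        exact h1.mul ((dw y hy).mul (da y hy)))
    norm_num at F
    have := imono (f := fun y => (1 - y ^ 2) * a y ^ 2)
      (k := fun y => ((-(2 * y * (w y * a y)) + (1 - y ^ 2) * (a y * a y + w y * b y)) +
        |w y| * |√(1 - y^2) * b y|) + 2 * (|w y| * |a y|)) (by fun_prop) (by fun_prop) (by
      intro y hy
      have o := om_nn hy
      have hy1 : |y| ≤ 1 := abs_le.2 hy
      have k1 : y * (w y * a y) ≤ |w y| * |a y| := by
        calc y * (w y * a y) ≤ |y * (w y * a y)| := le_abs_self _
          _ = |y| * (|w y| * |a y|) := by rw [abs_mul, abs_mul]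
          _ ≤ 1 * (|w y| * |a y|) := by gcongr
          _ = _ := one_mul _
      have k2 : -((1 - y ^ 2) * (w y * b y)) ≤ |w y| * |√(1 - y^2) * b y| := by
        have s1 : √(1 - y^2) ≤ 1 := by exact Real.sqrt_le_one.2 (by nlinarith)
        calc -((1 - y ^ 2) * (w y * b y)) ≤ |(1 - y ^ 2) * (w y * b y)| := neg_le_abs _
          _ = √(1 - y^2) * (|w y| * (√(1 - y^2) * |b y|)) := by
            rw [abs_mul, abs_mul, abs_of_nonneg o]
            nth_rw 1 [← Real.sq_sqrt o]; ring
          _ ≤ 1 * (|w y| * (√(1 - y^2) * |b y|)) := by gcongr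
          _ = _ := by rw [abs_mul, abs_of_nonneg (Real.sqrt_nonneg _), one_mul]
      nlinarith)
    rw [iadd (by fun_prop) (by fun_prop), iadd (by fun_prop) (by fun_prop), F, nA2,
      intervalIntegral.integral_const_mul] at this
    linarith
  · have F := ftc11 (F := fun y => (1 - y ^ 2) * (y * a y ^ 2))
      (f := fun y => (-2 * y) * (y * a y ^ 2) + (1 - y ^ 2) * (1 * a y ^ 2 + y * (2 * a y * b y)))
      (by fun_prop) (by fun_prop) (fun y hy => by
        have h1 : HasDerivAt (fun y : ℝ => 1 - y ^ 2) (-2 * y) y := d_om y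
        have h2 : HasDerivAt (fun y : ℝ => a y ^ 2) (2 * a y * b y) y := d_sq (da y hy)
        exact h1.mul ((hasDerivAt_id y).mul h2))
    have F0 : ∫ y in (-1:ℝ)..1, (-(1/2)) * ((-2 * y) * (y * a y ^ 2) + (1 - y ^ 2) * (1 * a y ^ 2 + y * (2 * a y * b y))) = 0 := by
      rw [intervalIntegral.integral_const_mul, F]; norm_num
    have := imono (f := fun y => a y ^ 2)
      (k := fun y => ((-(1/2)) * ((-2 * y) * (y * a y ^ 2) + (1 - y ^ 2) * (1 * a y ^ 2 + y * (2 * a y * b y))) +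
        |√(1 - y^2) * a y| * |√(1 - y^2) * b y|) + 3/2 * ((1 - y ^ 2) * a y ^ 2)) (by fun_prop) (by fun_prop) (by
      intro y hy
      have o := om_nn hy
      have hy1 : |y| ≤ 1 := abs_le.2 hy
      have k2 : -((1 - y ^ 2) * (y * (a y * b y))) ≤ |√(1 - y^2) * a y| * |√(1 - y^2) * b y| := by
        calc -((1 - y ^ 2) * (y * (a y * b y))) ≤ |(1 - y ^ 2) * (y * (a y * b y))| := neg_le_abs _
          _ = |y| * ((√(1 - y^2) * |a y|) * (√(1 - y^2) * |b y|)) := by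
            rw [abs_mul, abs_mul, abs_mul, abs_of_nonneg o]
            nth_rw 1 [← Real.sq_sqrt o]; ring
          _ ≤ 1 * ((√(1 - y^2) * |a y|) * (√(1 - y^2) * |b y|)) := by gcongr
          _ = _ := by rw [abs_mul, abs_mul, abs_of_nonneg (Real.sqrt_nonneg _), one_mul]
      have k3 : -((1 - y ^ 2) * (y * (a y * b y))) ≤ (1 - y ^ 2) * (y * (a y * b y)) +
         2 * (|√(1 - y^2) * a y| * |√(1 - y^2) * b y|) := by linarith
      have k4 : (1 - y ^ 2) * (y * (a y * b y)) ≤ |√(1 - y^2) * a y| * |√(1 - y^2) * b y| := by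
        calc ((1 - y ^ 2) * (y * (a y * b y))) ≤ |(1 - y ^ 2) * (y * (a y * b y))| := le_abs_self _
          _ = |y| * ((√(1 - y^2) * |a y|) * (√(1 - y^2) * |b y|)) := by
            rw [abs_mul, abs_mul, abs_mul, abs_of_nonneg o]
            nth_rw 1 [← Real.sq_sqrt o]; ring
          _ ≤ 1 * ((√(1 - y^2) * |a y|) * (√(1 - y^2) * |b y|)) := by gcongr
          _ = _ := by rw [abs_mul, abs_mul, abs_of_nonneg (Real.sqrt_nonneg _), one_mul]
      nlinarith)
    rw [iadd (by fun_prop) (by fun_prop), iadd (by fun_prop) (by fun_prop), F0,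
      intervalIntegral.integral_const_mul, nA2, al2] at this
    linarith
  · intro y hy
    have h := osc (F := fun y => (1 - y ^ 2) * a y ^ 2)
      (f := fun y => (-2 * y) * a y ^ 2 + (1 - y ^ 2) * (2 * a y * b y)) (by fun_prop) (by fun_prop)
      (fun y hy => by
        have h1 : HasDerivAt (fun y : ℝ => 1 - y ^ 2) (-2 * y) y := d_om y
        have h2 : HasDerivAt (fun y : ℝ => a y ^ 2) (2 * a y * b y) y := d_sq (da y hy)
        exact h1.mul h2) m1 hy
    have := imono (f := fun y => |(-2 * y) * a y ^ 2 + (1 - y ^ 2) * (2 * a y * b y)|)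
      (k := fun y => 2 * a y ^ 2 + 2 * (|√(1 - y^2) * a y| * |√(1 - y^2) * b y|)) (by fun_prop) (by fun_prop) (by
      intro y hy
      have o := om_nn hy
      have hy1 : |y| ≤ 1 := abs_le.2 hy
      refine (abs_add_le _ _).trans (add_le_add ?_ (le_of_eq ?_))
      · rw [abs_mul, abs_mul, abs_of_nonneg (sq_nonneg (a y))]
        norm_num
        nlinarith [sq_nonneg (a y)]
      · rw [abs_mul, abs_mul, abs_mul, abs_mul, abs_mul, abs_of_nonneg o, abs_of_nonneg (Real.sqrt_nonneg _)]
        nth_rw 1 [← Real.sq_sqrt o]; norm_num; ring)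
    rw [iadd (by fun_prop) (by fun_prop), intervalIntegral.integral_const_mul, intervalIntegral.integral_const_mul, al2] at this
    have q := le_abs_self ((1 - y ^ 2) * a y ^ 2 - (1 - (-1:ℝ) ^ 2) * a (-1) ^ 2)
    have h' : |(1 - y ^ 2) * a y ^ 2 - (1 - (-1:ℝ) ^ 2) * a (-1) ^ 2| ≤ _ := h
    have e0 : (1 - (-1:ℝ) ^ 2) * a (-1) ^ 2 = 0 := by norm_num
    rw [e0] at q h'
    linarith

lemma numer (e d nw al nA nb r q M : ℝ) (he : 0 ≤ e) (hd : 0 ≤ d) (hnw0 : 0 ≤ nw) (hal0 : 0 ≤ al)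
    (hnA0 : 0 ≤ nA) (hnb0 : 0 ≤ nb) (hr : 0 ≤ r) (hq : 0 ≤ q) (_hM : 0 ≤ M)
    (h1 : nw ^ 2 = 2 * e ^ 2) (h2 : d ^ 2 = 8 * al ^ 2 + 1/2 * nb ^ 2)
    (r2 : r ^ 2 = e * d) (q2 : q ^ 2 = r * d) (M2 : M ^ 2 = 3 * e * al)
    (i1 : nw ^ 2 ≤ 4 * nw * al) (i2 : nA ^ 2 ≤ nw * nb + 2 * nw * al)
    (i3 : al ^ 2 ≤ 3/2 * nA ^ 2 + nA * nb) :
    nw ≤ 3/2 * e ∧ al ≤ d / 2 ∧ nA ≤ 2 * r ∧ al ≤ 4 * q ∧ al ^ 2 ≤ 11 * (r * d) ∧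
    2 * al ^ 2 + 2 * nA * nb ≤ 36 * (r * d) ∧ M ≤ 2 * r ∧ M ≤ 3 * d := by
  have a1 : nw ≤ 3/2 * e := by
    apply le_of_sq_le_sq _ (by positivity); nlinarith [sq_nonneg e]
  have a2 : al ≤ d / 2 := by
    apply le_of_sq_le_sq _ (by positivity); nlinarith [sq_nonneg al, sq_nonneg nb]
  have a3 : nb ≤ 3/2 * d := by
    apply le_of_sq_le_sq _ (by positivity); nlinarith [sq_nonneg al, sq_nonneg nb]
  have a4 : e ≤ 3/2 * d := by
    by_cases h : e = 0
    · rw [h]; positivity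
    have : 0 < e := lt_of_le_of_ne he (Ne.symm h)
    have k : 2 * e ^ 2 ≤ 4 * (3/2 * e) * al := by
      rw [← h1]; refine i1.trans ?_; gcongr
    have : e ≤ 3 * al := by nlinarith
    linarith
  have a5 : nA ≤ 2 * r := by
    apply le_of_sq_le_sq _ (by positivity)
    have k1 : nw * nb ≤ (3/2 * e) * (3/2 * d) := by gcongr
    have k2 : nw * al ≤ (3/2 * e) * (d/2) := by gcongr
    have := mul_nonneg he hd
    nlinarith
  have a6 : r ≤ 5/4 * d := by
    apply le_of_sq_le_sq _ (by positivity)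
    nlinarith
  have k3 : nA * nb ≤ (2 * r) * (3/2 * d) := by gcongr
  have k4 : nA ^ 2 ≤ (2 * r) ^ 2 := by gcongr
  have k5 : r * r ≤ r * (5/4 * d) := by gcongr
  have a7 : al ^ 2 ≤ 11 * (r * d) := by nlinarith
  have a8 : M ≤ 2 * r := by
    apply le_of_sq_le_sq _ (by positivity)
    have : e * al ≤ e * (d/2) := by gcongr
    nlinarith [mul_nonneg he hd]
  refine ⟨a1, a2, a5, ?_, a7, by nlinarith [mul_nonneg hr hd], a8, by linarith⟩
  apply le_of_sq_le_sq _ (by positivity)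
  nlinarith [mul_nonneg hr hd]

set_option maxHeartbeats 1000000 in
lemma numer2 (e d nw al nA r q M H : ℝ) (he : 0 ≤ e) (hd : 0 ≤ d) (hnw0 : 0 ≤ nw) (hal0 : 0 ≤ al)
    (hnA0 : 0 ≤ nA) (hr : 0 ≤ r) (hq : 0 ≤ q) (hM : 0 ≤ M)
    (r2 : r ^ 2 = e * d) (q2 : q ^ 2 = r * d) (M2 : M ^ 2 = 3 * e * al)
    (a1 : nw ≤ 3/2 * e) (a2 : al ≤ d / 2) (a3 : nA ≤ 2 * r) (a4 : al ≤ 4 * q)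
    (a5 : al ^ 2 ≤ 11 * (r * d)) (a6 : M ≤ 2 * r) (a7 : M ≤ 3 * d) (hH : H = 1 + 2 * e) :
    (25 * H ^ 4 * M + 15 * H ^ 3 * M ^ 2 + 1/2 * H ^ 2 * M ^ 3) * (nw * al)
      + 19 * H ^ 4 * M * al ^ 2 + 7/2 * H ^ 3 * M ^ 2 * nA ^ 2
      + 3/2 * H ^ 4 * (6 * q) * (nA * al) + (H ^ 5 - 1) * d ^ 2
    ≤ 1000000 * ((e + e ^ 5) * d ^ 2) := by
  have hH0 : 0 ≤ H := by rw [hH]; positivity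
  have t1 : M * (nw * al) ≤ (3 * d) * ((3/2 * e) * (d/2)) := by gcongr
  have t2 : M ^ 2 * (nw * al) ≤ (3 * e * (d / 2)) * ((3/2 * e) * (d/2)) := by rw [M2]; gcongr
  have t4 : M ^ 3 * (nw * al) ≤ 99 * (e ^ 3 * d ^ 2) := by
    calc M ^ 3 * (nw * al) = M * M ^ 2 * (nw * al) := by ring
      _ = M * 3 * e * nw * al ^ 2 := by rw [M2]; ring
      _ ≤ (2 * r) * 3 * e * (3/2 * e) * (11 * (r * d)) := by gcongr
      _ = 99 * e ^ 2 * d * r ^ 2 := by ring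
      _ = _ := by rw [r2]; ring
  have t3 : M * al ^ 2 ≤ 22 * (e * d ^ 2) := by
    calc M * al ^ 2 ≤ (2 * r) * (11 * (r * d)) := by gcongr
      _ = 22 * d * r ^ 2 := by ring
      _ = _ := by rw [r2]; ring
  have t5 : M ^ 2 * nA ^ 2 ≤ 6 * (e ^ 2 * d ^ 2) := by
    calc M ^ 2 * nA ^ 2 ≤ (3 * e * (d/2)) * (2 * r) ^ 2 := by rw [M2]; gcongr
      _ = 6 * e * d * r ^ 2 := by ring
      _ = _ := by rw [r2]; ring
  have t6 : q * (nA * al) ≤ 8 * (e * d ^ 2) := by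
    calc q * (nA * al) ≤ q * ((2 * r) * (4 * q)) := by gcongr
      _ = 8 * r * q ^ 2 := by ring
      _ = 8 * d * r ^ 2 := by rw [q2]; ring
      _ = _ := by rw [r2]; ring
  have s1 : H ^ 4 * (M * (nw * al)) ≤ H ^ 4 * ((3 * d) * ((3/2 * e) * (d/2))) := by gcongr
  have s2 : H ^ 3 * (M ^ 2 * (nw * al)) ≤ H ^ 3 * ((3 * e * (d / 2)) * ((3/2 * e) * (d/2))) := by gcongr
  have s3 : H ^ 4 * (M * al ^ 2) ≤ H ^ 4 * (22 * (e * d ^ 2)) := by gcongr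
  have s4 : H ^ 2 * (M ^ 3 * (nw * al)) ≤ H ^ 2 * (99 * (e ^ 3 * d ^ 2)) := by gcongr
  have s5 : H ^ 3 * (M ^ 2 * nA ^ 2) ≤ H ^ 3 * (6 * (e ^ 2 * d ^ 2)) := by gcongr
  have s6 : H ^ 4 * (q * (nA * al)) ≤ H ^ 4 * (8 * (e * d ^ 2)) := by gcongr
  have hd2 : 0 ≤ d ^ 2 := by positivity
  have p2 : e ^ 2 * d ^ 2 ≤ (e + e ^ 5) * d ^ 2 := by
    gcongr
    rcases le_total e 1 with h | h
    · have := pow_le_pow_of_le_one he h (show 1 ≤ 2 by norm_num); rw [pow_one] at this; linarith [pow_nonneg he 5]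
    · have := pow_le_pow_right₀ h (show 2 ≤ 5 by norm_num); linarith
  have p3 : e ^ 3 * d ^ 2 ≤ (e + e ^ 5) * d ^ 2 := by
    gcongr
    rcases le_total e 1 with h | h
    · have := pow_le_pow_of_le_one he h (show 1 ≤ 3 by norm_num); rw [pow_one] at this; linarith [pow_nonneg he 5]
    · have := pow_le_pow_right₀ h (show 3 ≤ 5 by norm_num); linarith
  have p4 : e ^ 4 * d ^ 2 ≤ (e + e ^ 5) * d ^ 2 := by
    gcongr
    rcases le_total e 1 with h | h
    · have := pow_le_pow_of_le_one he h (show 1 ≤ 4 by norm_num); rw [pow_one] at this; linarith [pow_nonneg he 5]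
    · have := pow_le_pow_right₀ h (show 4 ≤ 5 by norm_num); linarith
  have p1 : e * d ^ 2 ≤ (e + e ^ 5) * d ^ 2 := by
    gcongr; linarith [pow_nonneg he 5]
  have p5 : e ^ 5 * d ^ 2 ≤ (e + e ^ 5) * d ^ 2 := by
    gcongr; linarith
  set X := (e + e ^ 5) * d ^ 2
  have H4 : H ^ 4 * (e * d ^ 2) ≤ 81 * X := by
    have : H ^ 4 * (e * d ^ 2) = e * d ^ 2 + 8 * (e ^ 2 * d ^ 2) + 24 * (e ^ 3 * d ^ 2)
      + 32 * (e ^ 4 * d ^ 2) + 16 * (e ^ 5 * d ^ 2) := by rw [hH]; ring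
    linarith
  have H3 : H ^ 3 * (e ^ 2 * d ^ 2) ≤ 27 * X := by
    have : H ^ 3 * (e ^ 2 * d ^ 2) = e ^ 2 * d ^ 2 + 6 * (e ^ 3 * d ^ 2) + 12 * (e ^ 4 * d ^ 2)
      + 8 * (e ^ 5 * d ^ 2) := by rw [hH]; ring
    linarith
  have H2 : H ^ 2 * (e ^ 3 * d ^ 2) ≤ 9 * X := by
    have : H ^ 2 * (e ^ 3 * d ^ 2) = e ^ 3 * d ^ 2 + 4 * (e ^ 4 * d ^ 2) + 4 * (e ^ 5 * d ^ 2) := by rw [hH]; ring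
    linarith
  have H5 : (H ^ 5 - 1) * d ^ 2 ≤ 242 * X := by
    have : (H ^ 5 - 1) * d ^ 2 = 10 * (e * d ^ 2) + 40 * (e ^ 2 * d ^ 2) + 80 * (e ^ 3 * d ^ 2)
      + 80 * (e ^ 4 * d ^ 2) + 32 * (e ^ 5 * d ^ 2) := by rw [hH]; ring
    linarith
  have X0 : 0 ≤ X := by positivity
  linarith

/-- pointwise bound of the remainder -/
lemma ptw (y g w a b H M K : ℝ) (hy : y ∈ Icc (-1:ℝ) 1) (hM0 : 0 ≤ M)
    (hgH : |g| ≤ H - 1) (hM : |w| ≤ M) (hK : |√(1 - y ^ 2) * a| ≤ K) :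
    25 * (1 + g) ^ 4 * w ^ 2 * a + 15 * y * (1 + g) ^ 3 * w ^ 3 * a + 19 * y * (1 + g) ^ 4 * w * a ^ 2
      - (1 - y ^ 2) / 2 * (1 + g) ^ 2 * w ^ 4 * a - 7/2 * (1 - y ^ 2) * (1 + g) ^ 3 * w ^ 2 * a ^ 2
      - 3/2 * (1 - y ^ 2) * (1 + g) ^ 4 * a ^ 3 + 8 * ((1 + g) ^ 5 - 1) * a ^ 2
      + (1 - y ^ 2) / 2 * ((1 + g) ^ 5 - 1) * b ^ 2 ≤
    (((25 * H ^ 4 * M + 15 * H ^ 3 * M ^ 2 + 1/2 * H ^ 2 * M ^ 3) * (|w| * |a|)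
      + 19 * H ^ 4 * M * a ^ 2) + 7/2 * H ^ 3 * M ^ 2 * ((1 - y ^ 2) * a ^ 2)
      + 3/2 * H ^ 4 * K * (|√(1 - y ^ 2) * a| * |a|))
      + ((H ^ 5 - 1) * 8 * a ^ 2 + (H ^ 5 - 1) * (1/2) * ((1 - y ^ 2) * b ^ 2)) := by
  have o := om_nn hy
  have o1 : 1 - y ^ 2 ≤ 1 := by nlinarith
  have hy1 : |y| ≤ 1 := abs_le.2 hy
  have h1 : |1 + g| ≤ H := by
    have := abs_add_le 1 g; rw [abs_one] at this; linarith
  have hH0 : 0 ≤ H := (abs_nonneg _).trans h1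
  have hp : |(1 + g) ^ 5 - 1| ≤ H ^ 5 - 1 := by
    have e1 : (1 + g) ^ 5 - 1 = g * ((1+g)^4 + (1+g)^3 + (1+g)^2 + (1+g) + 1) := by ring
    have e2 : H ^ 5 - 1 = (H - 1) * (H^4 + H^3 + H^2 + H + 1) := by ring
    rw [e1, e2, abs_mul]
    have : |(1+g)^4 + (1+g)^3 + (1+g)^2 + (1+g) + 1| ≤ H^4 + H^3 + H^2 + H + 1 := by
      calc _ ≤ |(1+g)^4| + |(1+g)^3| + |(1+g)^2| + |1+g| + |(1:ℝ)| := by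
            refine (abs_add_le _ _).trans ?_; gcongr
            refine (abs_add_le _ _).trans ?_; gcongr
            refine (abs_add_le _ _).trans ?_; gcongr
            exact abs_add_le _ _
        _ ≤ _ := by rw [abs_pow, abs_pow, abs_pow, abs_one]; gcongr
    have : 0 ≤ H - 1 := (abs_nonneg _).trans hgH
    gcongr
  have u1 : 25 * (1 + g) ^ 4 * w ^ 2 * a ≤ 25 * H ^ 4 * M * (|w| * |a|) := by
    refine (le_abs_self _).trans ?_
    simp only [abs_mul, abs_pow]
    calc |25| * |1 + g| ^ 4 * |w| ^ 2 * |a| = 25 * |1 + g| ^ 4 * |w| * (|w| * |a|) := by rw [Nat.abs_ofNat]; ring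
      _ ≤ _ := by gcongr
  have u2 : 15 * y * (1 + g) ^ 3 * w ^ 3 * a ≤ 15 * H ^ 3 * M ^ 2 * (|w| * |a|) := by
    refine (le_abs_self _).trans ?_
    simp only [abs_mul, abs_pow]
    calc |15| * |y| * |1 + g| ^ 3 * |w| ^ 3 * |a| = 15 * |y| * |1 + g| ^ 3 * |w| ^ 2 * (|w| * |a|) := by rw [Nat.abs_ofNat]; ring
      _ ≤ 15 * 1 * H ^ 3 * M ^ 2 * (|w| * |a|) := by gcongr
      _ = _ := by ring
  have u3 : 19 * y * (1 + g) ^ 4 * w * a ^ 2 ≤ 19 * H ^ 4 * M * a ^ 2 := by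
    refine (le_abs_self _).trans ?_
    simp only [abs_mul, abs_pow]
    rw [sq_abs]
    calc |19| * |y| * |1 + g| ^ 4 * |w| * a ^ 2 = 19 * |y| * |1 + g| ^ 4 * |w| * a ^ 2 := by norm_num
      _ ≤ 19 * 1 * H ^ 4 * M * a ^ 2 := by gcongr
      _ = _ := by ring
  have u4 : -((1 - y ^ 2) / 2 * (1 + g) ^ 2 * w ^ 4 * a) ≤ 1/2 * H ^ 2 * M ^ 3 * (|w| * |a|) := by
    refine (neg_le_abs _).trans ?_
    simp only [abs_mul, abs_pow, abs_div, abs_of_nonneg o]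
    calc (1 - y ^ 2) / |2| * |1 + g| ^ 2 * |w| ^ 4 * |a| = (1 - y ^ 2) / 2 * |1 + g| ^ 2 * |w| ^ 3 * (|w| * |a|) := by rw [Nat.abs_ofNat]; ring
      _ ≤ 1 / 2 * H ^ 2 * M ^ 3 * (|w| * |a|) := by gcongr
  have u5 : -(7/2 * (1 - y ^ 2) * (1 + g) ^ 3 * w ^ 2 * a ^ 2) ≤ 7/2 * H ^ 3 * M ^ 2 * ((1 - y ^ 2) * a ^ 2) := by
    refine (neg_le_abs _).trans ?_
    simp only [abs_mul, abs_pow, abs_div, abs_of_nonneg o]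
    rw [sq_abs a]
    calc |7| / |2| * (1 - y ^ 2) * |1 + g| ^ 3 * |w| ^ 2 * a ^ 2 = 7/2 * |1 + g| ^ 3 * |w| ^ 2 * ((1 - y ^ 2) * a ^ 2) := by norm_num; ring
      _ ≤ _ := by gcongr
  have u6 : -(3/2 * (1 - y ^ 2) * (1 + g) ^ 4 * a ^ 3) ≤ 3/2 * H ^ 4 * K * (|√(1 - y ^ 2) * a| * |a|) := by
    refine (neg_le_abs _).trans ?_
    calc |3/2 * (1 - y ^ 2) * (1 + g) ^ 4 * a ^ 3|
        = 3/2 * |1 + g| ^ 4 * |√(1 - y ^ 2) * a| * (|√(1 - y ^ 2) * a| * |a|) := by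
          simp only [abs_mul, abs_pow, abs_div, abs_of_nonneg o, abs_of_nonneg (Real.sqrt_nonneg (1 - y^2))]
          nth_rw 1 [← Real.sq_sqrt o]; norm_num; ring
      _ ≤ _ := by gcongr
  have hp' := (le_abs_self _).trans hp
  have u7 : 8 * ((1 + g) ^ 5 - 1) * a ^ 2 ≤ (H ^ 5 - 1) * 8 * a ^ 2 := by nlinarith [sq_nonneg a]
  have u8 : (1 - y ^ 2) / 2 * ((1 + g) ^ 5 - 1) * b ^ 2 ≤ (H ^ 5 - 1) * (1/2) * ((1 - y ^ 2) * b ^ 2) := by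
    have := mul_le_mul_of_nonneg_right hp' (mul_nonneg o (sq_nonneg b))
    nlinarith
  linarith

set_option maxHeartbeats 2000000 in
/-- bound for the remainder integral -/
lemma rem_est (g w a b : ℝ → ℝ) (hg : ContinuousOn g (Icc (-1) 1)) (hw : ContinuousOn w (Icc (-1) 1))
    (ha : ContinuousOn a (Icc (-1) 1)) (hb : ContinuousOn b (Icc (-1) 1))
    (dg : ∀ y ∈ Ioo (-1:ℝ) 1, HasDerivAt g (w y) y)
    (dw : ∀ y ∈ Ioo (-1:ℝ) 1, HasDerivAt w (a y) y)
    (da : ∀ y ∈ Ioo (-1:ℝ) 1, HasDerivAt a (b y) y)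
    (g0 : g (-1) = 0) (g1 : g 1 = 0) (e d : ℝ) (he : 0 ≤ e) (hd : 0 ≤ d)
    (hE : e ^ 2 = 1/2 * ∫ y in (-1:ℝ)..1, w y ^ 2)
    (hD : d ^ 2 = 8 * (∫ y in (-1:ℝ)..1, a y ^ 2) + 1/2 * ∫ y in (-1:ℝ)..1, (1 - y ^ 2) * b y ^ 2) :
    ∫ y in (-1:ℝ)..1, (25 * (1 + g y) ^ 4 * w y ^ 2 * a y + 15 * y * (1 + g y) ^ 3 * w y ^ 3 * a y
      + 19 * y * (1 + g y) ^ 4 * w y * a y ^ 2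
      - (1 - y ^ 2) / 2 * (1 + g y) ^ 2 * w y ^ 4 * a y
      - 7/2 * (1 - y ^ 2) * (1 + g y) ^ 3 * w y ^ 2 * a y ^ 2
      - 3/2 * (1 - y ^ 2) * (1 + g y) ^ 4 * a y ^ 3 + 8 * ((1 + g y) ^ 5 - 1) * a y ^ 2
      + (1 - y ^ 2) / 2 * ((1 + g y) ^ 5 - 1) * b y ^ 2) ≤ 1000000 * ((e + e ^ 5) * d ^ 2) := by
  obtain ⟨nw, hnw⟩ : ∃ x, x = √(∫ y in (-1:ℝ)..1, w y ^ 2) := ⟨_, rfl⟩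
  obtain ⟨al, hal⟩ : ∃ x, x = √(∫ y in (-1:ℝ)..1, a y ^ 2) := ⟨_, rfl⟩
  obtain ⟨nA, hnA⟩ : ∃ x, x = √(∫ y in (-1:ℝ)..1, (1 - y ^ 2) * a y ^ 2) := ⟨_, rfl⟩
  obtain ⟨nb, hnb⟩ : ∃ x, x = √(∫ y in (-1:ℝ)..1, (1 - y ^ 2) * b y ^ 2) := ⟨_, rfl⟩
  have nw2 : ∫ y in (-1:ℝ)..1, w y ^ 2 = nw ^ 2 := by
    rw [hnw, Real.sq_sqrt]; exact inn fun y _ => sq_nonneg _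
  have al2 : ∫ y in (-1:ℝ)..1, a y ^ 2 = al ^ 2 := by
    rw [hal, Real.sq_sqrt]; exact inn fun y _ => sq_nonneg _
  have nA2 : ∫ y in (-1:ℝ)..1, (1 - y ^ 2) * a y ^ 2 = nA ^ 2 := by
    rw [hnA, Real.sq_sqrt]; exact inn fun y hy => mul_nonneg (om_nn hy) (sq_nonneg _)
  have nb2 : ∫ y in (-1:ℝ)..1, (1 - y ^ 2) * b y ^ 2 = nb ^ 2 := by
    rw [hnb, Real.sq_sqrt]; exact inn fun y hy => mul_nonneg (om_nn hy) (sq_nonneg _)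
  obtain ⟨f1, f2, f3, f4, f5, f6, f7, f8⟩ := fn_est g w a b hg hw ha hb dg dw da g0 g1 nw al nA nb hnw hal hnA hnb
  have nw0 : 0 ≤ nw := by rw [hnw]; positivity
  have al0 : 0 ≤ al := by rw [hal]; positivity
  have nA0 : 0 ≤ nA := by rw [hnA]; positivity
  have nb0 : 0 ≤ nb := by rw [hnb]; positivity
  have r2 := Real.sq_sqrt (mul_nonneg he hd)
  have q2 := Real.sq_sqrt (mul_nonneg (Real.sqrt_nonneg (e * d)) hd)
  have M2 := Real.sq_sqrt (by positivity : 0 ≤ 3 * e * al)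
  have r0 := Real.sqrt_nonneg (e * d)
  have q0 := Real.sqrt_nonneg (√(e * d) * d)
  have M0 := Real.sqrt_nonneg (3 * e * al)
  set r := √(e * d)
  set q := √(r * d)
  set M := √(3 * e * al)
  rw [nw2] at hE
  rw [al2, nb2] at hD
  obtain ⟨a1, a2, a3, a4, a5, a5', a6, a7⟩ := numer e d nw al nA nb r q M he hd nw0 al0 nA0 nb0 r0 q0 M0
    (by linarith) hD r2 q2 M2 f3 f4 f5
  have fin := numer2 e d nw al nA r q M _ he hd nw0 al0 nA0 r0 q0 M0 r2 q2 M2 a1 a2 a3 a4 a5 a6 a7 rfl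
  set H := 1 + 2 * e with hH
  have hH0 : 0 ≤ H := by positivity
  have s2 : √2 * nw ≤ H - 1 := by
    have : nw = √2 * e := by
      rw [← Real.sqrt_sq nw0, show nw ^ 2 = 2 * e ^ 2 by linarith, Real.sqrt_mul (by norm_num), Real.sqrt_sq he]
    rw [this, ← mul_assoc, Real.mul_self_sqrt (by norm_num)]; linarith
  clear_value H M q r
  refine le_trans ?_ fin
  refine (imono (by fun_prop) (k := fun y =>
     (((25 * H ^ 4 * M + 15 * H ^ 3 * M ^ 2 + 1/2 * H ^ 2 * M ^ 3) * (|w y| * |a y|)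
      + 19 * H ^ 4 * M * a y ^ 2) + 7/2 * H ^ 3 * M ^ 2 * ((1 - y ^ 2) * a y ^ 2)
      + 3/2 * H ^ 4 * (6 * q) * (|√(1 - y ^ 2) * a y| * |a y|))
      + ((H ^ 5 - 1) * 8 * a y ^ 2 + (H ^ 5 - 1) * (1/2) * ((1 - y ^ 2) * b y ^ 2))) (by fun_prop) ?_).trans ?_
  · intro y hy
    apply ptw y _ _ _ _ H M (6 * q) hy M0
    · exact (f1 y hy).trans s2
    · refine abs_le_of_sq_le_sq ?_ M0
      rw [M2]
      refine (f2 y hy).trans ?_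
      have := mul_le_mul_of_nonneg_right a1 al0
      linarith
    · apply abs_le_of_sq_le_sq _ (by positivity)
      rw [mul_pow, Real.sq_sqrt (om_nn hy)]
      refine (f6 y hy).trans (a5'.trans (le_of_eq ?_))
      rw [← q2]; ring
  · rw [iadd (by fun_prop) (by fun_prop), iadd (by fun_prop) (by fun_prop), iadd (by fun_prop) (by fun_prop),
      iadd (by fun_prop) (by fun_prop), iadd (by fun_prop) (by fun_prop)]
    simp only [intervalIntegral.integral_const_mul]
    rw [al2, nA2, nb2]
    have : (H ^ 5 - 1) * 8 * al ^ 2 + (H ^ 5 - 1) * (1/2) * nb ^ 2 = (H ^ 5 - 1) * d ^ 2 := by rw [hD]; ring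
    rw [this]
    gcongr

/-- space-time domain -/
def SS : Set (ℝ × ℝ) := (Ici (0:ℝ)) ×ˢ (Icc (-1:ℝ) 1)

lemma SS_ud : UniqueDiffOn ℝ SS := (uniqueDiffOn_Ici 0).prod (uniqueDiffOn_Icc (by norm_num))

/-- directional derivative within the domain -/
noncomputable def Pd (v : ℝ × ℝ) (G : ℝ × ℝ → ℝ) : ℝ × ℝ → ℝ := fun q => fderivWithin ℝ G SS q v

lemma Pd_smooth (v : ℝ × ℝ) {G : ℝ × ℝ → ℝ} (h : ContDiffOn ℝ ((⊤ : ℕ∞) : WithTop ℕ∞) G SS) :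
    ContDiffOn ℝ ((⊤ : ℕ∞) : WithTop ℕ∞) (Pd v G) SS :=
  (h.fderivWithin SS_ud (by simp)).clm_apply contDiffOn_const

lemma Pd_y {G : ℝ × ℝ → ℝ} (h : ContDiffOn ℝ ((⊤ : ℕ∞) : WithTop ℕ∞) G SS) {t y : ℝ} (ht : 0 ≤ t)
    (hy : y ∈ Icc (-1:ℝ) 1) :
    HasDerivWithinAt (fun z => G (t, z)) (Pd (0, 1) G (t, y)) (Icc (-1) 1) y := by
  have h1 := (h.differentiableOn (by simp) (t, y) ⟨ht, hy⟩).hasFDerivWithinAt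
  have h2 : HasDerivWithinAt (fun z : ℝ => (t, z)) (0, 1) (Icc (-1) 1) y :=
    (hasDerivWithinAt_const y _ t).prodMk (hasDerivWithinAt_id y _)
  exact h1.comp_hasDerivWithinAt (t := SS) y h2 (fun z hz => ⟨ht, hz⟩)

lemma Pd_y' {G : ℝ × ℝ → ℝ} (h : ContDiffOn ℝ ((⊤ : ℕ∞) : WithTop ℕ∞) G SS) {t y : ℝ} (ht : 0 ≤ t)
    (hy : y ∈ Ioo (-1:ℝ) 1) :
    HasDerivAt (fun z => G (t, z)) (Pd (0, 1) G (t, y)) y :=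
  (Pd_y h ht (Ioo_subset_Icc_self hy)).hasDerivAt (Icc_mem_nhds hy.1 hy.2)

lemma Pd_t {G : ℝ × ℝ → ℝ} (h : ContDiffOn ℝ ((⊤ : ℕ∞) : WithTop ℕ∞) G SS) {t y : ℝ} (ht : 0 < t)
    (hy : y ∈ Icc (-1:ℝ) 1) :
    HasDerivAt (fun s => G (s, y)) (Pd (1, 0) G (t, y)) t := by
  have h1 := (h.differentiableOn (by simp) (t, y) ⟨ht.le, hy⟩).hasFDerivWithinAt
  have h2 : HasDerivWithinAt (fun s : ℝ => (s, y)) (1, 0) (Ici 0) t :=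
    (hasDerivWithinAt_id t _).prodMk (hasDerivWithinAt_const t _ y)
  have := h1.comp_hasDerivWithinAt (t := SS) t h2 (fun z hz => ⟨hz, hy⟩)
  exact this.hasDerivAt (Ici_mem_nhds ht)

lemma dI_eq {G : ℝ × ℝ → ℝ} (h : ContDiffOn ℝ ((⊤ : ℕ∞) : WithTop ℕ∞) G SS) {t : ℝ} (ht : 0 ≤ t)
    {f : ℝ → ℝ} (hf : EqOn f (fun z => G (t, z)) (Icc (-1) 1)) :
    EqOn (dI f) (fun z => Pd (0, 1) G (t, z)) (Icc (-1) 1) := by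
  intro y hy
  unfold dI
  rw [derivWithin_congr hf (hf hy)]
  exact (Pd_y h ht hy).derivWithin (uniqueDiffOn_Icc (by norm_num) y hy)

lemma slice_cont {G : ℝ × ℝ → ℝ} (h : ContDiffOn ℝ ((⊤ : ℕ∞) : WithTop ℕ∞) G SS) {t : ℝ} (ht : 0 ≤ t) :
    ContinuousOn (fun z => G (t, z)) (Icc (-1) 1) :=
  fun y hy => (Pd_y h ht hy).continuousWithinAt

lemma Pd_symm {G : ℝ × ℝ → ℝ} (h : ContDiffOn ℝ ((⊤ : ℕ∞) : WithTop ℕ∞) G SS) {t y : ℝ} (ht : 0 < t)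
    (hy : y ∈ Ioo (-1:ℝ) 1) : Pd (1, 0) (Pd (0, 1) G) (t, y) = Pd (0, 1) (Pd (1, 0) G) (t, y) := by
  have hq : (t, y) ∈ SS := ⟨ht.le, Ioo_subset_Icc_self hy⟩
  have hi : (t, y) ∈ interior SS := by
    rw [mem_interior_iff_mem_nhds]
    exact prod_mem_nhds (Ici_mem_nhds ht) (Icc_mem_nhds hy.1 hy.2)
  have sy := (h (t, y) hq).isSymmSndFDerivWithinAt (by
    rw [minSmoothness_of_isRCLikeNormedField]
    exact WithTop.coe_le_coe.2 (le_top : (2:ℕ∞) ≤ ⊤)) SS_ud (subset_closure hi) hq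
  have hd : DifferentiableWithinAt ℝ (fderivWithin ℝ G SS) SS (t, y) :=
    (h.fderivWithin SS_ud (m := ((⊤ : ℕ∞) : WithTop ℕ∞)) (by simp)).differentiableOn (by simp) _ hq
  have key : ∀ u v : ℝ × ℝ, Pd u (Pd v G) (t, y) = fderivWithin ℝ (fderivWithin ℝ G SS) SS (t, y) u v := by
    intro u v
    unfold Pd
    rw [fderivWithin_clm_apply (SS_ud _ hq) hd (differentiableWithinAt_const _)]
    simp
  rw [key, key]
  exact sy _ _

lemma Ioo_int (f : ℝ → ℝ) : ∫ y in Ioo (-1:ℝ) 1, f y = ∫ y in (-1:ℝ)..1, f y := by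
  rw [intervalIntegral.integral_of_le (by norm_num), integral_Ioc_eq_integral_Ioo]

lemma ii_congr {f k : ℝ → ℝ} (h : EqOn f k (Icc (-1) 1)) :
    ∫ y in (-1:ℝ)..1, f y = ∫ y in (-1:ℝ)..1, k y := by
  apply intervalIntegral.integral_congr
  rwa [uIcc_of_le (by norm_num)]

lemma ii_congr' {f k : ℝ → ℝ} (h : EqOn f k (Ioo (-1) 1)) :
    ∫ y in (-1:ℝ)..1, f y = ∫ y in (-1:ℝ)..1, k y := by
  rw [← Ioo_int, ← Ioo_int]
  exact setIntegral_congr_fun measurableSet_Ioo h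

open Filter Topology in
lemma energy_deriv {G : ℝ × ℝ → ℝ} (h : ContDiffOn ℝ ((⊤ : ℕ∞) : WithTop ℕ∞) G SS) {t : ℝ} (ht : 0 < t)
    (g : ℝ → ℝ → ℝ) (hG : ∀ s y, G (s, y) = g s y) (h0 : ∀ s ≥ (0:ℝ), g s (-1) = 0 ∧ g s 1 = 0) :
    HasDerivAt (energy g) (-∫ y in (-1:ℝ)..1, Pd (0,1) (Pd (0,1) G) (t, y) * Pd (1,0) G (t, y)) t := by
  have hy := Pd_smooth (0,1) h
  have hyt := Pd_smooth (1,0) hy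
  have ht' := Pd_smooth (1,0) h
  have hyy := Pd_smooth (0,1) hy
  have hty := Pd_smooth (0,1) ht'
  set w := Pd (0,1) G with hw
  set z := Pd (1,0) w with hz
  have sub : ∀ s ∈ Icc (t/2) (2*t), ∀ y ∈ Icc (-1:ℝ) 1, (s, y) ∈ SS :=
    fun s hs y hy => ⟨le_trans (by positivity) hs.1, hy⟩
  obtain ⟨C, hC⟩ := (isCompact_Icc.prod isCompact_Icc : IsCompact (Icc (t/2) (2*t) ×ˢ Icc (-1:ℝ) 1)).exists_bound_of_continuousOn
    (f := fun q => 2 * w q * z q) (by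
      have : (Icc (t/2) (2*t) ×ˢ Icc (-1:ℝ) 1) ⊆ SS := fun q hq => sub _ hq.1 _ hq.2
      have c1 := hy.continuousOn.mono this
      have c2 := hyt.continuousOn.mono this
      fun_prop)
  have nb : Icc (t/2) (2*t) ∈ 𝓝 t := Icc_mem_nhds (by linarith) (by linarith)
  have intg : ∀ f : ℝ → ℝ, ContinuousOn f (Icc (-1) 1) → Integrable f (volume.restrict (Ioo (-1:ℝ) 1)) :=
    fun f hf => (hf.integrableOn_Icc).mono_set Ioo_subset_Icc_self
  have D := (hasDerivAt_integral_of_dominated_loc_of_deriv_le (μ := volume.restrict (Ioo (-1:ℝ) 1))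
    (F := fun s y => w (s, y) ^ 2) (F' := fun s y => 2 * w (s, y) * z (s, y)) (bound := fun _ => C) nb
    (by
      filter_upwards [nb] with s hs
      have := slice_cont hy (t := s) (le_trans (by positivity) hs.1)
      exact (intg _ (this.pow 2)).aestronglyMeasurable)
    (by
      have := slice_cont hy ht.le
      exact intg _ (this.pow 2))
    (by
      have := slice_cont hy ht.le
      have h2 := slice_cont hyt ht.le
      exact (intg _ ((continuousOn_const.mul this).mul h2)).aestronglyMeasurable)
    (by
      refine (ae_restrict_iff' measurableSet_Ioo).2 (Eventually.of_forall fun y hy s hs => ?_)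
      exact hC (s, y) ⟨hs, Ioo_subset_Icc_self hy⟩)
    (intg _ continuousOn_const)
    (by
      refine (ae_restrict_iff' measurableSet_Ioo).2 (Eventually.of_forall fun y hy' s hs => ?_)
      exact d_sq (Pd_t hy (lt_of_lt_of_le (by positivity) hs.1) (Ioo_subset_Icc_self hy')))).2
  have D2 := D.const_mul (1/2)
  have ev : energy g =ᶠ[𝓝 t] fun s => 1/2 * ∫ y in Ioo (-1:ℝ) 1, w (s, y) ^ 2 := by
    filter_upwards [nb] with s hs
    unfold energy
    congr 1
    apply setIntegral_congr_fun measurableSet_Ioo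
    intro y hy
    have := dI_eq h (t := s) (le_trans (by positivity) hs.1) (f := g s) (fun y _ => (hG s y).symm) (Ioo_subset_Icc_self hy)
    simp only [this]
    rfl
  refine (D2.congr_of_eventuallyEq ev).congr_deriv ?_
  rw [Ioo_int]
  have c1 := slice_cont hy ht.le
  have c2 := slice_cont ht' ht.le
  have c3 := slice_cont hyy ht.le
  have c4 := slice_cont hty ht.le
  have B := ftc11 (F := fun y => w (t, y) * Pd (1,0) G (t, y))
    (f := fun y => Pd (0,1) w (t, y) * Pd (1,0) G (t, y) + w (t, y) * Pd (0,1) (Pd (1,0) G) (t, y))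
    (c1.mul c2) ((c3.mul c2).add (c1.mul c4)) (fun y hy' => (Pd_y' hy ht.le hy').mul (Pd_y' ht' ht.le hy'))
  have z1 : ∀ y ∈ Icc (-1:ℝ) 1, (∀ s ≥ (0:ℝ), g s y = 0) → Pd (1,0) G (t, y) = 0 := by
    intro y hy h0
    have d1 := Pd_t h ht hy
    have d2 : HasDerivAt (fun s => G (s, y)) 0 t := by
      refine (hasDerivAt_const t (0:ℝ)).congr_of_eventuallyEq ?_
      filter_upwards [Ici_mem_nhds ht] with s hs
      rw [hG, h0 s hs]
    exact d1.unique d2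
  simp only [z1 (-1) (by norm_num) (fun s hs => (h0 s hs).1), z1 1 (by norm_num) (fun s hs => (h0 s hs).2)] at B
  rw [iadd (f := fun y => Pd (0,1) w (t, y) * Pd (1,0) G (t, y))
    (k := fun y => w (t, y) * Pd (0,1) (Pd (1,0) G) (t, y)) (c3.mul c2) (c1.mul c4)] at B
  have e1 : ∫ y in (-1:ℝ)..1, 2 * w (t, y) * z (t, y) = 2 * ∫ y in (-1:ℝ)..1, w (t, y) * Pd (0,1) (Pd (1,0) G) (t, y) := by
    rw [← intervalIntegral.integral_const_mul]
    apply ii_congr'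
    intro y hy
    simp only [hz, hw, Pd_symm h ht hy]
    ring
  rw [e1]
  linarith

lemma d_h {g : ℝ → ℝ} {w y : ℝ} (n : ℕ) (h : HasDerivAt g w y) :
    HasDerivAt (fun y : ℝ => (1 + g y) ^ n) (n * (1 + g y) ^ (n - 1) * w) y :=
  ((h.const_add 1).fun_pow n)

/-- the energy identity on a time slice -/
lemma slice_est (g w a b c k : ℝ → ℝ) (hg : ContinuousOn g (Icc (-1) 1)) (hw : ContinuousOn w (Icc (-1) 1))
    (ha : ContinuousOn a (Icc (-1) 1)) (hb : ContinuousOn b (Icc (-1) 1))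
    (hc : ContinuousOn c (Icc (-1) 1)) (hk : ContinuousOn k (Icc (-1) 1))
    (dg : ∀ y ∈ Ioo (-1:ℝ) 1, HasDerivAt g (w y) y)
    (dw : ∀ y ∈ Ioo (-1:ℝ) 1, HasDerivAt w (a y) y)
    (da : ∀ y ∈ Ioo (-1:ℝ) 1, HasDerivAt a (b y) y)
    (db : ∀ y ∈ Ioo (-1:ℝ) 1, HasDerivAt b (c y) y)
    (g0 : g (-1) = 0) (g1 : g 1 = 0)
    (pde : ∀ y ∈ Ioo (-1:ℝ) 1, k y
      + (-10 * a y - 5 * y * b y + (1 - y ^ 2) / 2 * c y)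
    = -25 * (1 + g y) ^ 4 * (w y) ^ 2
      - 10 * ((1 + g y) ^ 5 - 1) * a y
      - 15 * y * (1 + g y) ^ 3 * (w y) ^ 3
      - 30 * y * (1 + g y) ^ 4 * w y * a y
      - 5 * y * ((1 + g y) ^ 5 - 1) * b y
      + (1 - y ^ 2) / 2 * (1 + g y) ^ 2 * (w y) ^ 4
      + 11/2 * (1 - y ^ 2) * (1 + g y) ^ 3 * (w y) ^ 2 * a y
      + 2 * (1 - y ^ 2) * (1 + g y) ^ 4 * (a y) ^ 2
      + 7/2 * (1 - y ^ 2) * (1 + g y) ^ 4 * w y * b y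
      + (1 - y ^ 2) / 2 * ((1 + g y) ^ 5 - 1) * c y) :
    (-∫ y in (-1:ℝ)..1, a y * k y) + (8 * (∫ y in (-1:ℝ)..1, a y ^ 2) +
      1/2 * ∫ y in (-1:ℝ)..1, (1 - y ^ 2) * b y ^ 2) ≤
    ∫ y in (-1:ℝ)..1, (25 * (1 + g y) ^ 4 * w y ^ 2 * a y + 15 * y * (1 + g y) ^ 3 * w y ^ 3 * a y
      + 19 * y * (1 + g y) ^ 4 * w y * a y ^ 2
      - (1 - y ^ 2) / 2 * (1 + g y) ^ 2 * w y ^ 4 * a y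
      - 7/2 * (1 - y ^ 2) * (1 + g y) ^ 3 * w y ^ 2 * a y ^ 2
      - 3/2 * (1 - y ^ 2) * (1 + g y) ^ 4 * a y ^ 3 + 8 * ((1 + g y) ^ 5 - 1) * a y ^ 2
      + (1 - y ^ 2) / 2 * ((1 + g y) ^ 5 - 1) * b y ^ 2) := by
  have Fd := ftc11
    (F := fun y => (2 * y) * (((1 + g y) ^ 5 - 2) * a y ^ 2)
      - (1 - y ^ 2) * (1/2 * (((1 + g y) ^ 5 - 2) * (a y * b y)) + 1/2 * ((1 + g y) ^ 4 * (w y * a y ^ 2))))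
    (f := fun y => (2 * 1) * (((1 + g y) ^ 5 - 2) * a y ^ 2)
        + (2 * y) * (((5:ℕ) * (1 + g y) ^ (5 - 1) * w y) * a y ^ 2 + ((1 + g y) ^ 5 - 2) * (2 * a y * b y))
      - ((-2 * y) * (1/2 * (((1 + g y) ^ 5 - 2) * (a y * b y)) + 1/2 * ((1 + g y) ^ 4 * (w y * a y ^ 2)))
        + (1 - y ^ 2) * (1/2 * (((5:ℕ) * (1 + g y) ^ (5 - 1) * w y) * (a y * b y)
              + ((1 + g y) ^ 5 - 2) * (b y * b y + a y * c y))
            + 1/2 * (((4:ℕ) * (1 + g y) ^ (4 - 1) * w y) * (w y * a y ^ 2)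
              + (1 + g y) ^ 4 * (a y * a y ^ 2 + w y * (2 * a y * b y))))))
    (by fun_prop) (by fun_prop) (fun y hy => by
      have p1 := (d_h 5 (dg y hy)).sub_const 2
      have p2 := d_h 4 (dg y hy)
      have s := d_sq (da y hy)
      exact (((hasDerivAt_id' y).const_mul 2).mul (p1.mul s)).sub ((d_om y).mul
        (((p1.mul ((da y hy).mul (db y hy))).const_mul (1/2)).add
          ((p2.mul ((dw y hy).mul s)).const_mul (1/2)))))
  have bd : (∫ y in (-1:ℝ)..1, ((2 * 1) * (((1 + g y) ^ 5 - 2) * a y ^ 2)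
        + (2 * y) * (((5:ℕ) * (1 + g y) ^ (5 - 1) * w y) * a y ^ 2 + ((1 + g y) ^ 5 - 2) * (2 * a y * b y))
      - ((-2 * y) * (1/2 * (((1 + g y) ^ 5 - 2) * (a y * b y)) + 1/2 * ((1 + g y) ^ 4 * (w y * a y ^ 2)))
        + (1 - y ^ 2) * (1/2 * (((5:ℕ) * (1 + g y) ^ (5 - 1) * w y) * (a y * b y)
              + ((1 + g y) ^ 5 - 2) * (b y * b y + a y * c y))
            + 1/2 * (((4:ℕ) * (1 + g y) ^ (4 - 1) * w y) * (w y * a y ^ 2)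
              + (1 + g y) ^ 4 * (a y * a y ^ 2 + w y * (2 * a y * b y)))))))
      ≤ 0 := by
    rw [Fd]
    simp only [g0, g1]
    nlinarith [sq_nonneg (a 1), sq_nonneg (a (-1))]
  have e1 : (-∫ y in (-1:ℝ)..1, a y * k y) + (8 * (∫ y in (-1:ℝ)..1, a y ^ 2) +
      1/2 * ∫ y in (-1:ℝ)..1, (1 - y ^ 2) * b y ^ 2) =
      ∫ y in (-1:ℝ)..1, ((-(a y * k y)) + (8 * a y ^ 2 + 1/2 * ((1 - y ^ 2) * b y ^ 2))) := by
    rw [iadd (by fun_prop) (by fun_prop), iadd (by fun_prop) (by fun_prop),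
      intervalIntegral.integral_const_mul, intervalIntegral.integral_const_mul, intervalIntegral.integral_neg]
  rw [e1]
  refine le_trans (le_of_eq ?_) (add_le_of_nonpos_right bd)
  rw [← iadd (by fun_prop) (by fun_prop)]
  apply ii_congr'
  intro y hy
  have P := pde y hy
  have : k y = -25 * (1 + g y) ^ 4 * (w y) ^ 2
      - 10 * ((1 + g y) ^ 5 - 1) * a y
      - 15 * y * (1 + g y) ^ 3 * (w y) ^ 3
      - 30 * y * (1 + g y) ^ 4 * w y * a y
      - 5 * y * ((1 + g y) ^ 5 - 1) * b y
      + (1 - y ^ 2) / 2 * (1 + g y) ^ 2 * (w y) ^ 4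
      + 11/2 * (1 - y ^ 2) * (1 + g y) ^ 3 * (w y) ^ 2 * a y
      + 2 * (1 - y ^ 2) * (1 + g y) ^ 4 * (a y) ^ 2
      + 7/2 * (1 - y ^ 2) * (1 + g y) ^ 4 * w y * b y
      + (1 - y ^ 2) / 2 * ((1 + g y) ^ 5 - 1) * c y
      - (-10 * a y - 5 * y * b y + (1 - y ^ 2) / 2 * c y) := by linarith
  simp only [this]
  generalize g y = g
  push_cast
  ring

/-- **Proposition 4.1 (the energy estimate)**: for a smooth solution `g` of the Lagrangian
thin-film equation, `E'(t) + D(t) ≲ E² + E¹⁰ + (E^{1/3} + E^{5/2}) D` for all `t > 0`. -/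
theorem energy_estimate (g : ℝ → ℝ → ℝ) (hg : IsSolution g) :
    ∃ C > (0:ℝ), ∀ t > (0:ℝ),
      deriv (energy g) t + dissipation g t ≤
        C * (energy g t ^ 2 + energy g t ^ 10
          + (energy g t ^ ((1:ℝ)/3) + energy g t ^ ((5:ℝ)/2)) * dissipation g t) := by
  obtain ⟨hs, h0, pde⟩ := hg
  refine ⟨2000000, by norm_num, fun t ht => ?_⟩
  obtain ⟨G, hGdef⟩ : ∃ G : ℝ × ℝ → ℝ, G = fun q : ℝ × ℝ => g q.1 q.2 := ⟨_, rfl⟩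
  have hG : ContDiffOn ℝ ((⊤ : ℕ∞) : WithTop ℕ∞) G SS := by rw [hGdef]; exact hs
  have hGg : ∀ s y, G (s, y) = g s y := fun s y => by rw [hGdef]
  have h1 := Pd_smooth (0,1) hG
  have h2 := Pd_smooth (0,1) h1
  have h3 := Pd_smooth (0,1) h2
  have h4 := Pd_smooth (0,1) h3
  have ht1 := Pd_smooth (1,0) hG
  have q1 := dI_eq hG ht.le (f := g t) (fun y _ => (hGg t y).symm)
  have q2 := dI_eq h1 ht.le q1
  have q3 := dI_eq h2 ht.le q2
  have q4 := dI_eq h3 ht.le q3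
  have ED := energy_deriv hG ht g hGg h0
  have eE : energy g t = 1/2 * ∫ y in (-1:ℝ)..1, Pd (0,1) G (t, y) ^ 2 := by
    unfold energy
    rw [Ioo_int]
    congr 1
    exact ii_congr fun y hy => by simp only [q1 hy]
  have eD : dissipation g t = 8 * (∫ y in (-1:ℝ)..1, Pd (0,1) (Pd (0,1) G) (t, y) ^ 2) +
      1/2 * ∫ y in (-1:ℝ)..1, (1 - y ^ 2) * Pd (0,1) (Pd (0,1) (Pd (0,1) G)) (t, y) ^ 2 := by
    unfold dissipation
    rw [Ioo_int, Ioo_int]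
    congr 2
    · exact ii_congr fun y hy => by simp only [q2 hy]
    · exact ii_congr fun y hy => by simp only [q3 hy]
  have E0 : 0 ≤ energy g t := by
    rw [eE]; exact mul_nonneg (by norm_num) (inn fun y _ => sq_nonneg _)
  have D0 : 0 ≤ dissipation g t := by
    rw [eD]
    exact add_nonneg (mul_nonneg (by norm_num) (inn fun y _ => sq_nonneg _))
      (mul_nonneg (by norm_num) (inn fun y hy => mul_nonneg (om_nn hy) (sq_nonneg _)))
  have c0 := slice_cont hG ht.le
  have c1 := slice_cont h1 ht.le
  have c2 := slice_cont h2 ht.le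
  have c3 := slice_cont h3 ht.le
  have c4 := slice_cont h4 ht.le
  have ct := slice_cont ht1 ht.le
  have b0 : G (t, -1) = 0 := by rw [hGg]; exact (h0 t ht.le).1
  have b1 : G (t, 1) = 0 := by rw [hGg]; exact (h0 t ht.le).2
  have S := slice_est (fun y => G (t, y)) _ _ _ _ (fun y => Pd (1,0) G (t, y)) c0 c1 c2 c3 c4 ct
    (fun y hy => Pd_y' hG ht.le hy) (fun y hy => Pd_y' h1 ht.le hy) (fun y hy => Pd_y' h2 ht.le hy)
    (fun y hy => Pd_y' h3 ht.le hy) b0 b1 (by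
      intro y hy
      have hy' := Ioo_subset_Icc_self hy
      have P := pde t ht y hy
      have k : deriv (fun s => g s y) t = Pd (1,0) G (t, y) := by
        have := (Pd_t hG ht hy').deriv
        simp only [hGg] at this
        exact this
      rw [k, q1 hy', q2 hy', q3 hy', q4 hy', ← hGg t y] at P
      exact P)
  have R := rem_est (fun y => G (t, y)) _ _ _ c0 c1 c2 c3
    (fun y hy => Pd_y' hG ht.le hy) (fun y hy => Pd_y' h1 ht.le hy) (fun y hy => Pd_y' h2 ht.le hy)
    b0 b1 (√(energy g t)) (√(dissipation g t)) (Real.sqrt_nonneg _) (Real.sqrt_nonneg _)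
    (by rw [Real.sq_sqrt E0]; exact eE) (by rw [Real.sq_sqrt D0]; exact eD)
  rw [Real.sq_sqrt D0] at R
  rw [ED.deriv]
  rw [← eD] at S
  refine S.trans (R.trans ?_)
  generalize energy g t = E at *
  generalize dissipation g t = D at *
  have s5 : √E ^ 5 = E ^ ((5:ℝ)/2) := by
    rw [Real.sqrt_eq_rpow, ← Real.rpow_natCast, ← Real.rpow_mul E0]; norm_num
  have s1 : √E ≤ E ^ ((1:ℝ)/3) + E ^ ((5:ℝ)/2) := by
    rw [Real.sqrt_eq_rpow]
    have n1 := Real.rpow_nonneg E0 ((1:ℝ)/3)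
    have n2 := Real.rpow_nonneg E0 ((5:ℝ)/2)
    rcases le_total E 1 with h | h
    · have := Real.rpow_le_rpow_of_exponent_ge' E0 h (by norm_num : (0:ℝ) ≤ 1/3) (by norm_num : (1:ℝ)/3 ≤ 1/2)
      linarith
    · have := Real.rpow_le_rpow_of_exponent_le h (by norm_num : (1:ℝ)/2 ≤ 5/2)
      linarith
  have n1 := Real.rpow_nonneg E0 ((1:ℝ)/3)
  have k1 : (√E + √E ^ 5) * D ≤ 2 * ((E ^ ((1:ℝ)/3) + E ^ ((5:ℝ)/2)) * D) := by
    rw [s5]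
    have : √E + E ^ ((5:ℝ)/2) ≤ 2 * (E ^ ((1:ℝ)/3) + E ^ ((5:ℝ)/2)) := by linarith
    have := mul_le_mul_of_nonneg_right this D0
    linarith
  have k2 : 0 ≤ E ^ 2 + E ^ 10 := by positivity
  linarith
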